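/- Let n ≥ 1 and k = (k_1,...,k_n) ∈ ℤ^n. Then the sum of the signs of all generalized Gelfand-Tsetlin patterns of order n with bottom row a_{n,j} = k_j (j = 1,...,n), multiplied by ∏_{1 ≤ i < j ≤ n} (j − i), equals ∏_{1 ≤ i < j ≤ n} (k_j − k_i + j − i). -/

import Mathlib

/-- A generalized Gelfand-Tsetlin pattern of order `n`: a triangular array
`(a_{i,j})_{1 ≤ j ≤ i ≤ n}` (row `i : Fin n` has `i + 1` entries) such that for every
entry `a_{i,j}` with `i ≤ n - 1`: if `a_{i+1,j} ≤ a_{i+1,j+1}` then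
`a_{i+1,j} ≤ a_{i,j} ≤ a_{i+1,j+1}`, and if `a_{i+1,j} > a_{i+1,j+1}` then
`a_{i+1,j} > a_{i,j} > a_{i+1,j+1}`. -/
def IsGenGT {n : ℕ} (a : ∀ i : Fin n, Fin (i.1 + 1) → ℤ) : Prop :=
  ∀ i : Fin n, ∀ hi : i.1 + 1 < n, ∀ j : Fin (i.1 + 1),
    if a ⟨i.1 + 1, hi⟩ ⟨j.1, by have := j.isLt; show j.1 < i.1 + 1 + 1; omega⟩ ≤
        a ⟨i.1 + 1, hi⟩ ⟨j.1 + 1, by have := j.isLt; show j.1 + 1 < i.1 + 1 + 1; omega⟩ then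
      a ⟨i.1 + 1, hi⟩ ⟨j.1, by have := j.isLt; show j.1 < i.1 + 1 + 1; omega⟩ ≤ a i j ∧
        a i j ≤ a ⟨i.1 + 1, hi⟩ ⟨j.1 + 1, by have := j.isLt; show j.1 + 1 < i.1 + 1 + 1; omega⟩
    else
      a ⟨i.1 + 1, hi⟩ ⟨j.1 + 1, by have := j.isLt; show j.1 + 1 < i.1 + 1 + 1; omega⟩ < a i j ∧
        a i j < a ⟨i.1 + 1, hi⟩ ⟨j.1, by have := j.isLt; show j.1 < i.1 + 1 + 1; omega⟩

/-- The number of inversions of a generalized Gelfand-Tsetlin pattern: entries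
`a_{i,j}` with `a_{i+1,j} > a_{i+1,j+1}`. -/
noncomputable def genGTInvCount {n : ℕ} (a : ∀ i : Fin n, Fin (i.1 + 1) → ℤ) : ℕ :=
  ∑ i : Fin n,
    if hi : i.1 + 1 < n then
      (Finset.univ.filter (fun j : Fin (i.1 + 1) =>
        a ⟨i.1 + 1, hi⟩ ⟨j.1 + 1, by have := j.isLt; show j.1 + 1 < i.1 + 1 + 1; omega⟩ <
          a ⟨i.1 + 1, hi⟩ ⟨j.1, by have := j.isLt; show j.1 < i.1 + 1 + 1; omega⟩)).card
    else 0

/-- The bottom row (row `n`) of a triangular array equals `k`. -/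
def BottomRow {n : ℕ} (a : ∀ i : Fin n, Fin (i.1 + 1) → ℤ) (k : Fin n → ℤ) : Prop :=
  ∀ i : Fin n, i.1 + 1 = n → ∀ j : Fin (i.1 + 1),
    a i j = k ⟨j.1, by have := j.isLt; omega⟩

/-- The signed enumeration of all generalized Gelfand-Tsetlin patterns of order `n`
with bottom row `k`, each pattern counted with sign `(-1) ^ (number of inversions)`. -/
noncomputable def LgenGT (n : ℕ) (k : Fin n → ℤ) : ℤ :=
  ∑ᶠ a ∈ {a : ∀ i : Fin n, Fin (i.1 + 1) → ℤ | IsGenGT a ∧ BottomRow a k},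
    (-1 : ℤ) ^ genGTInvCount a

/-!
Deleting the bottom row `k` of a pattern leaves a pattern whose bottom row `l` has its `j`-th entry
in the interval between `k_j` and `k_{j+1}`, the inversions of that row depending on `k` alone.
With the sign included, summing `F (x + 1) - F x` over this interval gives `F (k_{j+1} + 1) - F k_j`
in both orders of `k_j` and `k_{j+1}`; the strict inequalities at inversions are what makes this
uniform. By Pascal's rule and multilinearity the determinant of the binomial coefficients
`(k_i + i).choose j` therefore obeys the same recursion as the signed enumeration: subtracting
consecutive rows clears its first column and leaves exactly these differences. Since the polynomials
`j! * x.choose j` are monic of degree `j`, this determinant is the Vandermonde determinant of the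
`k_i + i` divided by `∏ j!`.
-/

section Determinants

open Matrix

variable {R : Type*} [CommRing R]

theorem det_eq_det_succ_sub_castSucc {n : ℕ} (A : Matrix (Fin (n + 1)) (Fin (n + 1)) R)
    (hA : ∀ i, A i 0 = 1) :
    A.det = (of fun i j : Fin n => A i.succ j.succ - A i.castSucc j.succ).det := by
  let B : Matrix (Fin (n + 1)) (Fin (n + 1)) R :=
    of (Fin.cons (A 0) fun i j => A i.succ j - A i.castSucc j)
  have hAB : A.det = B.det :=
    det_eq_of_forall_row_eq_smul_add_pred (fun _ => 1) (by simp [B]) (by simp [B])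
  have hB : ∀ i : Fin n, B i.succ 0 = 0 := by simp [B, hA]
  rw [hAB, det_succ_column_zero, Fin.sum_univ_succ, Finset.sum_eq_zero fun i _ => by simp [hB]]
  simp only [B, Fin.val_zero, pow_zero, one_mul, add_zero, of_apply, Fin.cons_zero, hA]
  rfl

theorem det_of_sum_rows {ι α : Type*} [Fintype ι] [DecidableEq ι] (s : ι → Finset α)
    (g : ι → α → ι → R) :
    (of fun i j => ∑ x ∈ s i, g i x j).det =
      ∑ l ∈ Fintype.piFinset s, (of fun i j => g i (l i) j).det := by
  have hrows : (of fun i j => ∑ x ∈ s i, g i x j) = fun i => ∑ x ∈ s i, g i x := by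
    ext i j
    simp
  rw [hrows]
  exact (detRowAlternating (R := R) (n := ι)).toMultilinearMap.map_sum_finset g s

theorem det_vandermonde_eq_prod_Iio_sub {n : ℕ} (v : Fin n → R) :
    (vandermonde v).det = ∏ q, ∏ p ∈ Finset.Iio q, (v q - v p) := by
  rw [det_vandermonde]
  exact Finset.prod_comm' (by simp)

/-- The matrix of binomial coefficients `(v i).choose j` of the entries of a vector in a binomial
ring, through which Vandermonde determinants are divided by the product of the factorials `j!`. -/
def chooseMatrix [BinomialRing R] {n : ℕ} (v : Fin n → R) : Matrix (Fin n) (Fin n) R :=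
  of fun i j => Ring.choose (v i) j

theorem aeval_descPochhammer_eq_factorial_mul_choose [BinomialRing R] (x : R) (n : ℕ) :
    Polynomial.aeval x (descPochhammer ℤ n) = n.factorial * Ring.choose x n := by
  rw [Polynomial.aeval_eq_smeval, Ring.descPochhammer_eq_factorial_smul_choose, nsmul_eq_mul]

theorem det_vandermonde_eq_prod_factorial_mul_det_chooseMatrix [BinomialRing R] {n : ℕ}
    (v : Fin n → R) :
    (vandermonde v).det = (∏ j : Fin n, (j.1.factorial : R)) * (chooseMatrix v).det := by
  nontriviality R
  have monic (j : ℕ) := monic_descPochhammer ℤ j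
  rw [det_eval_matrixOfPolynomials_eq_det_vandermonde v
    (fun j => (descPochhammer ℤ j).map (algebraMap ℤ R))
    (fun j => by rw [(monic j).natDegree_map, descPochhammer_natDegree])
    (fun j => (monic j).map _), ← det_mul_row]
  simp only [Polynomial.eval_map_algebraMap, aeval_descPochhammer_eq_factorial_mul_choose,
    chooseMatrix, of_apply]

theorem prod_factorial_eq_prod_Iio_sub (n : ℕ) :
    ∏ j : Fin (n + 1), (j.1.factorial : R) =
      ∏ q : Fin (n + 1), ∏ p ∈ Finset.Iio q, ((q.1 : R) - (p.1 : R)) := by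
  rw [← det_vandermonde_eq_prod_Iio_sub, det_vandermonde_id_eq_superFactorial,
    ← Nat.prod_range_succ_factorial, Nat.cast_prod, Fin.prod_univ_eq_prod_range
      (fun j => (j.factorial : R))]

end Determinants

section Interlacing

/-- The integers allowed at an entry of a generalized Gelfand-Tsetlin pattern whose two neighbours
in the row below are `a` and `b`, in this order. -/
noncomputable def interlacingInterval (a b : ℤ) : Finset ℤ :=
  if a ≤ b then Finset.Icc a b else Finset.Ioo b a

/-- The factor `-1` or `1` that an entry contributes to the sign of a pattern when its two
neighbours in the row below are `a` and `b`, in this order. -/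
def interlacingSign (a b : ℤ) : ℤ :=
  if b < a then -1 else 1

theorem sum_Ico_int_succ_sub {G : Type*} [AddCommGroup G] (F : ℤ → G) {a b : ℤ} (hab : a ≤ b) :
    ∑ x ∈ Finset.Ico a b, (F (x + 1) - F x) = F b - F a := by
  induction b, hab using Int.leInduction with
  | base => simp
  | succ b hab ih =>
    rw [← Finset.insert_Ico_right_eq_Ico_add_one hab, Finset.sum_insert (by simp), ih,
      sub_add_sub_cancel]

theorem interlacingSign_smul_sum_interlacingInterval {G : Type*} [AddCommGroup G] (F : ℤ → G)
    (a b : ℤ) :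
    interlacingSign a b • ∑ x ∈ interlacingInterval a b, (F (x + 1) - F x) =
      F (b + 1) - F a := by
  rcases le_or_gt a b with hab | hba
  · rw [interlacingSign, interlacingInterval, if_neg hab.not_gt, if_pos hab,
      ← Finset.Ico_add_one_right_eq_Icc, sum_Ico_int_succ_sub F (by lia), one_smul]
  · rw [interlacingSign, interlacingInterval, if_pos hba, if_neg hba.not_ge,
      ← Finset.Ico_add_one_left_eq_Ioo, sum_Ico_int_succ_sub F (by lia), neg_one_smul, neg_sub]

/-- The rows that may stand directly above the row `k` in a generalized Gelfand-Tsetlin pattern. -/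
noncomputable def interlacingRows {n : ℕ} (k : Fin (n + 1) → ℤ) : Finset (Fin n → ℤ) :=
  Fintype.piFinset fun j => interlacingInterval (k j.castSucc) (k j.succ)

/-- The sign `(-1) ^ i`, where `i` is the number of inversions in any row standing directly above
the row `k`. -/
def interlacingRowSign {n : ℕ} (k : Fin (n + 1) → ℤ) : ℤ :=
  ∏ j : Fin n, interlacingSign (k j.castSucc) (k j.succ)

theorem interlacingRowSign_eq_neg_one_pow {n : ℕ} (k : Fin (n + 1) → ℤ) :
    interlacingRowSign k =
      (-1) ^ (Finset.univ.filter fun j : Fin n => k j.succ < k j.castSucc).card := by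
  simp [interlacingRowSign, interlacingSign, Finset.prod_ite]

theorem choose_sub_choose_eq_interlacing_sum (a b c : ℤ) (m : ℕ) :
    Ring.choose (b + 1 + c) (m + 1) - Ring.choose (a + c) (m + 1) =
      interlacingSign a b * ∑ x ∈ interlacingInterval a b, Ring.choose (x + c) m := by
  have pascal (x : ℤ) :
      Ring.choose (x + 1 + c) (m + 1) - Ring.choose (x + c) (m + 1) = Ring.choose (x + c) m := by
    rw [add_right_comm, Ring.choose_succ_succ, add_sub_cancel_right]
  rw [← interlacingSign_smul_sum_interlacingInterval fun x => Ring.choose (x + c) (m + 1)]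
  simp only [pascal, smul_eq_mul]

theorem det_chooseMatrix_eq_sum_interlacingRows {n : ℕ} (k : Fin (n + 1) → ℤ) :
    (chooseMatrix fun i => k i + i).det =
      ∑ l ∈ interlacingRows k, interlacingRowSign k * (chooseMatrix fun i => l i + i).det :=
  calc
    _ = (Matrix.of fun i j : Fin n => Ring.choose (k i.succ + 1 + i) (j + 1) -
          Ring.choose (k i.castSucc + i) (j + 1)).det := by
      rw [det_eq_det_succ_sub_castSucc _ (by simp [chooseMatrix])]
      simp [chooseMatrix, add_assoc, add_comm (1 : ℤ)]
    _ = interlacingRowSign k * (Matrix.of fun i j : Fin n =>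
          ∑ x ∈ interlacingInterval (k i.castSucc) (k i.succ), Ring.choose (x + i) j).det := by
      simp only [choose_sub_choose_eq_interlacing_sum]
      exact Matrix.det_mul_column _ _
    _ = _ := by
      rw [det_of_sum_rows, Finset.mul_sum]
      rfl

end Interlacing

section Patterns

variable {n : ℕ}

/-- Triangular arrays of integers, the ambient type of patterns of order `n`. Rows are counted
from `0`, so that row `i` has `i + 1` entries. -/
abbrev TriangularArray (n : ℕ) : Type :=
  ∀ i : Fin n, Fin (i.1 + 1) → ℤ

theorem bottomRow_iff (a : TriangularArray (n + 1)) (k : Fin (n + 1) → ℤ) :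
    BottomRow a k ↔ a (Fin.last n) = k := by
  refine ⟨fun h => funext (h (Fin.last n) rfl), ?_⟩
  rintro rfl i hi j
  obtain rfl : i = Fin.last n := Fin.ext (by simpa using hi)
  rfl

theorem isGenGT_iff (a : TriangularArray (n + 1)) :
    IsGenGT a ↔ ∀ i : Fin n, a i.castSucc ∈ interlacingRows (a i.succ) := by
  have mem_iff (i : Fin n) : a i.castSucc ∈ interlacingRows (a i.succ) ↔
      ∀ j : Fin (i.1 + 1), if a i.succ j.castSucc ≤ a i.succ j.succ then
        a i.succ j.castSucc ≤ a i.castSucc j ∧ a i.castSucc j ≤ a i.succ j.succ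
      else a i.succ j.succ < a i.castSucc j ∧ a i.castSucc j < a i.succ j.castSucc := by
    refine Fintype.mem_piFinset.trans (forall_congr' fun j => ?_)
    unfold interlacingInterval
    split_ifs
    · exact Finset.mem_Icc
    · exact Finset.mem_Ioo
  simp only [mem_iff]
  exact ⟨fun h i => h i.castSucc (by simp), fun h i hi => h ⟨i, by lia⟩⟩

theorem neg_one_pow_genGTInvCount (a : TriangularArray (n + 1)) :
    (-1) ^ genGTInvCount a = ∏ i : Fin n, interlacingRowSign (a i.succ) := by
  have last_row : ¬ (Fin.last n).1 + 1 < n + 1 := by simp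
  have other_row (i : Fin n) : i.castSucc.1 + 1 < n + 1 := by simp
  simp only [interlacingRowSign_eq_neg_one_pow, Finset.prod_pow_eq_pow_sum, genGTInvCount,
    Fin.sum_univ_castSucc, dif_neg last_row, dif_pos (other_row _), add_zero]
  rfl

namespace TriangularArray

/-- The triangular array obtained from `a` by adding the bottom row `k`. -/
def addRow (a : TriangularArray n) (k : Fin (n + 1) → ℤ) : TriangularArray (n + 1) :=
  Fin.snoc (α := fun i : Fin (n + 1) => Fin (i.1 + 1) → ℤ) a k

theorem addRow_last (a : TriangularArray n) (k : Fin (n + 1) → ℤ) :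
    a.addRow k (Fin.last n) = k :=
  Fin.snoc_last (α := fun i : Fin (n + 1) => Fin (i.1 + 1) → ℤ) k a

theorem addRow_castSucc (a : TriangularArray n) (k : Fin (n + 1) → ℤ) (i : Fin n) :
    a.addRow k i.castSucc = a i :=
  Fin.snoc_castSucc (α := fun i : Fin (n + 1) => Fin (i.1 + 1) → ℤ) k a i

theorem addRow_succ_last (a : TriangularArray (n + 1)) (k : Fin (n + 2) → ℤ) :
    a.addRow k (Fin.last n).succ = k :=
  a.addRow_last k

theorem addRow_succ_castSucc (a : TriangularArray (n + 1)) (k : Fin (n + 2) → ℤ) (i : Fin n) :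
    a.addRow k i.castSucc.succ = a i.succ :=
  a.addRow_castSucc k i.succ

theorem addRow_left_injective (k : Fin (n + 1) → ℤ) :
    Function.Injective fun a : TriangularArray n => a.addRow k :=
  Fin.snoc_left_injective (α := fun i : Fin (n + 1) => Fin (i.1 + 1) → ℤ) k

theorem exists_addRow_eq (b : TriangularArray (n + 1)) :
    ∃ a : TriangularArray n, a.addRow (b (Fin.last n)) = b :=
  ⟨Fin.init b, Fin.snoc_init_self b⟩

end TriangularArray

theorem isGenGT_addRow (a : TriangularArray (n + 1)) (k : Fin (n + 2) → ℤ) :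
    IsGenGT (a.addRow k) ↔ IsGenGT a ∧ a (Fin.last n) ∈ interlacingRows k := by
  rw [isGenGT_iff, isGenGT_iff, Fin.forall_fin_succ']
  refine and_congr (forall_congr' fun i => ?_) ?_
  · rw [a.addRow_castSucc, a.addRow_succ_castSucc]
  · rw [a.addRow_castSucc, a.addRow_succ_last]

theorem neg_one_pow_genGTInvCount_addRow (a : TriangularArray (n + 1)) (k : Fin (n + 2) → ℤ) :
    (-1) ^ genGTInvCount (a.addRow k) = interlacingRowSign k * (-1) ^ genGTInvCount a := by
  rw [neg_one_pow_genGTInvCount, neg_one_pow_genGTInvCount, Fin.prod_univ_castSucc,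
    a.addRow_succ_last, mul_comm]
  simp only [a.addRow_succ_castSucc]

/-- The set of generalized Gelfand-Tsetlin patterns with bottom row `k`. -/
def genGTPatterns (k : Fin n → ℤ) : Set (TriangularArray n) :=
  {a | IsGenGT a ∧ BottomRow a k}

theorem LgenGT_eq_finsum_genGTPatterns (k : Fin n → ℤ) :
    LgenGT n k = ∑ᶠ a ∈ genGTPatterns k, (-1) ^ genGTInvCount a :=
  rfl

theorem mem_genGTPatterns {k : Fin (n + 1) → ℤ} {a : TriangularArray (n + 1)} :
    a ∈ genGTPatterns k ↔ IsGenGT a ∧ a (Fin.last n) = k :=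
  and_congr_right' (bottomRow_iff a k)

theorem genGTPatterns_fin_one (k : Fin 1 → ℤ) :
    genGTPatterns k = {TriangularArray.addRow finZeroElim k} := by
  ext b
  obtain ⟨a, ha⟩ := b.exists_addRow_eq
  rw [mem_genGTPatterns, Set.mem_singleton_iff, isGenGT_iff]
  constructor
  · rintro ⟨-, rfl⟩
    exact Subsingleton.elim a finZeroElim ▸ ha.symm
  · rintro rfl
    exact ⟨fun i => i.elim0, TriangularArray.addRow_last _ k⟩

theorem genGTPatterns_add_two (k : Fin (n + 2) → ℤ) :
    genGTPatterns k = (fun a : TriangularArray (n + 1) => a.addRow k) ''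
      ⋃ l ∈ interlacingRows k, genGTPatterns l := by
  ext b
  simp only [Set.mem_image, Set.mem_iUnion₂, mem_genGTPatterns]
  constructor
  · rintro ⟨hb, rfl⟩
    obtain ⟨a, ha⟩ := b.exists_addRow_eq
    rw [← ha, isGenGT_addRow] at hb
    exact ⟨a, ⟨a (Fin.last n), hb.2, hb.1, rfl⟩, ha⟩
  · rintro ⟨a, ⟨l, hl, ha, rfl⟩, rfl⟩
    exact ⟨(isGenGT_addRow a k).2 ⟨ha, hl⟩, a.addRow_last k⟩

theorem finite_genGTPatterns : ∀ {n : ℕ} (k : Fin (n + 1) → ℤ), (genGTPatterns k).Finite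
  | 0, k => by simp [genGTPatterns_fin_one]
  | n + 1, k => by
    rw [genGTPatterns_add_two]
    exact ((interlacingRows k).finite_toSet.biUnion fun l _ => finite_genGTPatterns l).image _

theorem pairwiseDisjoint_genGTPatterns (s : Set (Fin (n + 1) → ℤ)) :
    s.PairwiseDisjoint genGTPatterns := fun _ _ _ _ hne =>
  Set.disjoint_left.2 fun _ ha ha' =>
    hne ((mem_genGTPatterns.1 ha).2.symm.trans (mem_genGTPatterns.1 ha').2)

theorem LgenGT_one (k : Fin 1 → ℤ) : LgenGT 1 k = 1 := by
  rw [LgenGT_eq_finsum_genGTPatterns, genGTPatterns_fin_one, finsum_mem_singleton,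
    neg_one_pow_genGTInvCount, Fin.prod_univ_zero]

theorem LgenGT_add_two (k : Fin (n + 2) → ℤ) :
    LgenGT (n + 2) k = ∑ l ∈ interlacingRows k, interlacingRowSign k * LgenGT (n + 1) l := by
  simp only [LgenGT_eq_finsum_genGTPatterns]
  rw [genGTPatterns_add_two, finsum_mem_image (TriangularArray.addRow_left_injective k).injOn]
  simp only [neg_one_pow_genGTInvCount_addRow, ← finsum_mem_coe_finset, mul_finsum_mem]
  exact finsum_mem_biUnion (pairwiseDisjoint_genGTPatterns _) (interlacingRows k).finite_toSet
    fun l _ => finite_genGTPatterns l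

theorem LgenGT_eq_det_chooseMatrix :
    ∀ {n : ℕ} (k : Fin (n + 1) → ℤ), LgenGT (n + 1) k = (chooseMatrix fun i => k i + i).det
  | 0, k => by simp [LgenGT_one, chooseMatrix]
  | n + 1, k => by
    rw [LgenGT_add_two, det_chooseMatrix_eq_sum_interlacingRows]
    simp only [LgenGT_eq_det_chooseMatrix]

end Patterns

/-- The signed enumeration of generalized Gelfand-Tsetlin patterns with bottom row `k`
satisfies `L_n(k) · ∏_{1 ≤ i < j ≤ n} (j - i) = ∏_{1 ≤ i < j ≤ n} (k_j - k_i + j - i)`. -/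
theorem gen_gt_pattern_signed_enumeration (n : ℕ) (hn : 1 ≤ n) (k : Fin n → ℤ) :
    LgenGT n k * ∏ q : Fin n, ∏ p ∈ Finset.Iio q, ((q.1 : ℤ) - (p.1 : ℤ)) =
      ∏ q : Fin n, ∏ p ∈ Finset.Iio q, (k q - k p + ((q.1 : ℤ) - (p.1 : ℤ))) := by
  obtain ⟨m, rfl⟩ := Nat.exists_eq_add_of_le' hn
  calc
    _ = (∏ j : Fin (m + 1), (j.1.factorial : ℤ)) * (chooseMatrix fun i => k i + i).det := by
      rw [LgenGT_eq_det_chooseMatrix, prod_factorial_eq_prod_Iio_sub, mul_comm]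
    _ = (Matrix.vandermonde fun i => k i + i).det :=
      (det_vandermonde_eq_prod_factorial_mul_det_chooseMatrix _).symm
    _ = _ := by
      rw [det_vandermonde_eq_prod_Iio_sub]
      simp only [add_sub_add_comm]
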